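/- arXiv:1402.4163 — 4 statements merged into one kernel-verified Lean document; each statement's English description precedes it below -/
import Mathlib

section
/- Let (A_j)_{j≥1} be independent, identically distributed, strictly positive random variables on a probability space, and assume E[A_1^λ] < ∞ for every λ ∈ ℝ. Then the limit lim_{n→∞} (1/n) · ln E[ ( Σ_{r=0}^{n} Π_{j=1}^{r} A_j^{−1} )^{−1} ] exists and equals ln ( inf_{λ ∈ [0,1]} E[A_1^λ] ), where the empty product (r = 0) is 1. -/
open MeasureTheory

/-!
Write `Z` for the hitting probability and `φ s = E[A_1 ^ s]`.

Upper bound: `Z ≤ 1` and `Z ≤ ∏ A_j`, so `Z ≤ ∏ A_j ^ s` and `E[Z] ≤ φ s ^ n` for `s ∈ [0, 1]`.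

Lower bound: for `0 < t ≤ 1` subadditivity of `x ↦ x ^ t` gives
`Z ^ (-t) ≤ ∑ r, ∏_{j ≤ r} A_j ^ (-t)`, and Hölder's inequality turns this into
`φ s ^ (n * (1 + t)) ≤ E[Z] ^ t * ∑ r, φ (s + t * (s - 1)) ^ r * φ (s + t * s) ^ (n - r)`.
If `s` minimises `φ` over `[0, 1]`, the exponents `s + t * (s - 1)` and `s + t * s` are obtained
from `s` by moving away from the points `1` and `0` of `[0, 1]`. So if `φ` is differentiable, `φ`
exceeds `φ s` there by at most `o(t)`. Dividing the logarithm by `t * n` and letting `n → ∞`, then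
`t → 0`, gives the bound.

Differentiability is arranged by restricting the law of the weights to a compact subinterval of
`(0, ∞)`: this only decreases `E[Z]`, and since `x ^ s ≤ 1 + x` it changes `φ` on `[0, 1]`
uniformly little.
-/

open ProbabilityTheory Filter Topology

theorem rpow_sum_le_sum_rpow {ι : Type*} (s : Finset ι) {f : ι → ℝ} {p : ℝ}
    (hf : ∀ i ∈ s, 0 ≤ f i) (hp : 0 < p) (hp1 : p ≤ 1) :
    (∑ i ∈ s, f i) ^ p ≤ ∑ i ∈ s, f i ^ p :=
  Finset.le_sum_of_subadditive_on_pred (fun x : ℝ ↦ x ^ p) (0 ≤ ·)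
    (Real.zero_rpow hp.ne').le (fun _ _ hx hy ↦ Real.rpow_add_le_add_rpow hx hy hp.le hp1)
    (fun _ _ ↦ add_nonneg) f hf

theorem rpow_le_one_add {x s : ℝ} (hx : 0 ≤ x) (hs : s ∈ Set.Icc (0 : ℝ) 1) : x ^ s ≤ 1 + x :=
  calc x ^ s ≤ (1 + x) ^ s := Real.rpow_le_rpow hx (by linarith) hs.1
    _ ≤ (1 + x) ^ (1 : ℝ) := Real.rpow_le_rpow_of_exponent_le (by linarith) hs.2
    _ = 1 + x := Real.rpow_one _

theorem tendsto_log_add_one_div_atTop :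
    Tendsto (fun n : ℕ ↦ Real.log (n + 1) / n) atTop (𝓝 0) := by
  have hid : Tendsto (fun n : ℕ ↦ (n : ℝ) + 1) atTop atTop :=
    tendsto_atTop_add_const_right _ _ tendsto_natCast_atTop_atTop
  have h := (Real.tendsto_pow_log_div_mul_add_atTop 1 (-1) 1 one_ne_zero).comp hid
  simpa [Function.comp_def] using h

theorem eventually_le_add_mul_of_isMinOn {E : Type*} [NormedAddCommGroup E] [NormedSpace ℝ E]
    {f : E → ℝ} {s : Set E} {x y : E} {ε : ℝ} (hs : Convex ℝ s) (hmin : IsMinOn f s x)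
    (hx : x ∈ s) (hy : y ∈ s) (hf : DifferentiableAt ℝ f x) (hε : 0 < ε) :
    ∀ᶠ t : ℝ in 𝓝[>] 0, f (x + t • (x - y)) ≤ f x + ε * t := by
  have hfy : 0 ≤ fderiv ℝ f x (y - x) :=
    hmin.localize.hasFDerivWithinAt_nonneg hf.hasFDerivAt.hasFDerivWithinAt
      (sub_mem_posTangentConeAt_of_segment_subset (hs.segment_subset hx hy))
  have hlt : fderiv ℝ f x (x - y) < ε := by
    rw [← neg_sub, map_neg]
    linarith
  filter_upwards [(hf.hasFDerivAt.hasLineDerivAt (x - y)).tendsto_slope_zero_right.eventually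
    (gt_mem_nhds hlt), self_mem_nhdsWithin] with t hslope ht
  rw [smul_eq_mul, inv_mul_lt_iff₀ ht] at hslope
  linarith

theorem integral_le_rpow_mul_rpow {α : Type*} [MeasurableSpace α] {μ : Measure α}
    {f g h : α → ℝ} {p q : ℝ} (hp : 0 ≤ p) (hq : 0 ≤ q) (hpq : p + q = 1)
    (hf0 : 0 ≤ᵐ[μ] f) (hg0 : 0 ≤ᵐ[μ] g) (hh0 : 0 ≤ᵐ[μ] h)
    (hf : Integrable f μ) (hg : Integrable g μ) (hh : Integrable h μ)
    (hle : ∀ᵐ x ∂μ, f x ≤ g x ^ p * h x ^ q) :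
    ∫ x, f x ∂μ ≤ (∫ x, g x ∂μ) ^ p * (∫ x, h x ∂μ) ^ q := by
  have hgI : 0 ≤ ∫ x, g x ∂μ := integral_nonneg_of_ae hg0
  have hhI : 0 ≤ ∫ x, h x ∂μ := integral_nonneg_of_ae hh0
  rw [← ENNReal.ofReal_le_ofReal_iff (by positivity), ENNReal.ofReal_mul (by positivity),
    ← ENNReal.ofReal_rpow_of_nonneg hgI hp, ← ENNReal.ofReal_rpow_of_nonneg hhI hq,
    ofReal_integral_eq_lintegral_ofReal hf hf0, ofReal_integral_eq_lintegral_ofReal hg hg0,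
    ofReal_integral_eq_lintegral_ofReal hh hh0]
  refine le_trans (lintegral_mono_ae ?_) (ENNReal.lintegral_mul_norm_pow_le
    hg.aemeasurable.ennreal_ofReal hh.aemeasurable.ennreal_ofReal hp hq hpq)
  filter_upwards [hle, hg0, hh0] with x hx hgx hhx
  rw [ENNReal.ofReal_rpow_of_nonneg hgx hp, ENNReal.ofReal_rpow_of_nonneg hhx hq,
    ← ENNReal.ofReal_mul (Real.rpow_nonneg hgx p)]
  exact ENNReal.ofReal_le_ofReal hx

theorem integral_rpow_le_of_rpow_le {α : Type*} [MeasurableSpace α] {μ : Measure α}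
    {f g h : α → ℝ} {t : ℝ} (ht : 0 ≤ t) (hf0 : 0 ≤ᵐ[μ] f) (hg0 : 0 ≤ᵐ[μ] g)
    (hh0 : 0 ≤ᵐ[μ] h) (hf : Integrable f μ) (hg : Integrable g μ) (hh : Integrable h μ)
    (hle : ∀ᵐ x ∂μ, f x ^ (1 + t) ≤ g x ^ t * h x) :
    (∫ x, f x ∂μ) ^ (1 + t) ≤ (∫ x, g x ∂μ) ^ t * ∫ x, h x ∂μ := by
  have ht1 : 0 < 1 + t := by positivity
  have hroot {x y z : ℝ} (hx : 0 ≤ x) (hy : 0 ≤ y) (hz : 0 ≤ z) :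
      x ^ (1 + t) ≤ y ^ t * z ↔ x ≤ y ^ (t / (1 + t)) * z ^ (1 + t)⁻¹ := by
    rw [← Real.le_rpow_inv_iff_of_pos hx (by positivity) ht1,
      Real.mul_rpow (by positivity) hz, ← Real.rpow_mul hy, ← div_eq_mul_inv]
  rw [hroot (integral_nonneg_of_ae hf0) (integral_nonneg_of_ae hg0) (integral_nonneg_of_ae hh0)]
  refine integral_le_rpow_mul_rpow (by positivity) (by positivity) (by field_simp; ring)
    hf0 hg0 hh0 hf hg hh ?_
  filter_upwards [hle, hf0, hg0, hh0] with x hx hfx hgx hhx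
  exact (hroot hfx hgx hhx).1 hx

section HittingProb

variable {n : ℕ} {a : Fin n → ℝ} {s t : ℝ}

/-- The quenched probability that the walk along a ray with weights `a 0, …, a (n - 1)` reaches
level `n` before level `-1`. The weights are indexed from `0`, so the product over `j < r` is the
paper's `∏_{j=1}^{r} A_j⁻¹`. -/
noncomputable def hittingProb (a : Fin n → ℝ) : ℝ :=
  (∑ r ∈ Finset.range (n + 1), ∏ j with j.val < r, (a j)⁻¹)⁻¹

theorem measurable_hittingProb : Measurable (hittingProb (n := n)) := by
  unfold hittingProb
  fun_prop

theorem hittingProb_pos (ha : ∀ j, 0 < a j) : 0 < hittingProb a :=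
  inv_pos.2 <| Finset.sum_pos (fun _ _ ↦ Finset.prod_pos fun j _ ↦ inv_pos.2 (ha j)) (by simp)

theorem hittingProb_le_prod (ha : ∀ j, 0 < a j) {r : ℕ} (hr : r ≤ n) :
    hittingProb a ≤ ∏ j with j.val < r, a j := by
  have hnonneg : ∀ r ∈ Finset.range (n + 1), 0 ≤ ∏ j : Fin n with j.val < r, (a j)⁻¹ :=
    fun _ _ ↦ Finset.prod_nonneg fun j _ ↦ (inv_pos.2 (ha j)).le
  have hterm := Finset.single_le_sum hnonneg (Finset.mem_range_succ_iff.2 hr)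
  rw [hittingProb, ← inv_inv (∏ j with j.val < r, a j), ← Finset.prod_inv_distrib]
  exact inv_anti₀ (Finset.prod_pos fun j _ ↦ inv_pos.2 (ha j)) hterm

theorem hittingProb_le_one (ha : ∀ j, 0 < a j) : hittingProb a ≤ 1 := by
  simpa using hittingProb_le_prod ha (Nat.zero_le n)

theorem hittingProb_le_prod_rpow (ha : ∀ j, 0 < a j) (hs : s ∈ Set.Icc (0 : ℝ) 1) :
    hittingProb a ≤ ∏ j, a j ^ s := by
  have hpos := hittingProb_pos ha
  calc hittingProb a = hittingProb a ^ (1 : ℝ) := (Real.rpow_one _).symm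
    _ ≤ hittingProb a ^ s :=
      Real.rpow_le_rpow_of_exponent_ge hpos (hittingProb_le_one ha) hs.2
    _ ≤ (∏ j, a j) ^ s :=
      Real.rpow_le_rpow hpos.le (by simpa using hittingProb_le_prod ha le_rfl) hs.1
    _ = ∏ j, a j ^ s := (Real.finsetProd_rpow _ _ (fun j _ ↦ (ha j).le) s).symm

theorem prod_rpow_add_mul_ite (ha : ∀ j, 0 < a j) (r : ℕ) :
    ∏ j, a j ^ (s + t * (if j.val < r then s - 1 else s)) =
      (∏ j, a j ^ s) ^ (1 + t) * (∏ j with j.val < r, (a j)⁻¹) ^ t := by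
  have hfactor (j : Fin n) : a j ^ (s + t * (if j.val < r then s - 1 else s)) =
      (a j ^ s) ^ (1 + t) * (if j.val < r then (a j)⁻¹ else 1) ^ t := by
    split_ifs
    · rw [← Real.rpow_neg_one, ← Real.rpow_mul (ha j).le, ← Real.rpow_mul (ha j).le,
        ← Real.rpow_add (ha j)]
      ring_nf
    · rw [Real.one_rpow, mul_one, ← Real.rpow_mul (ha j).le]
      ring_nf
  have hnonneg (j : Fin n) : 0 ≤ if j.val < r then (a j)⁻¹ else 1 := by
    split_ifs
    exacts [(inv_pos.2 (ha j)).le, zero_le_one]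
  rw [Finset.prod_congr rfl fun j _ ↦ hfactor j, Finset.prod_mul_distrib, Finset.prod_filter,
    Real.finsetProd_rpow _ _ fun j _ ↦ Real.rpow_nonneg (ha j).le s,
    Real.finsetProd_rpow _ _ fun j _ ↦ hnonneg j]

theorem prod_rpow_rpow_le_hittingProb_rpow_mul (ha : ∀ j, 0 < a j) (ht : 0 < t) (ht1 : t ≤ 1) :
    (∏ j, a j ^ s) ^ (1 + t) ≤ hittingProb a ^ t *
      ∑ r ∈ Finset.range (n + 1), ∏ j, a j ^ (s + t * (if j.val < r then s - 1 else s)) := by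
  have hpos := hittingProb_pos ha
  have hsum : (hittingProb a ^ t)⁻¹ ≤
      ∑ r ∈ Finset.range (n + 1), (∏ j with j.val < r, (a j)⁻¹) ^ t := by
    rw [← Real.inv_rpow hpos.le, hittingProb, inv_inv]
    exact rpow_sum_le_sum_rpow _ (fun _ _ ↦ Finset.prod_nonneg fun j _ ↦ (inv_pos.2 (ha j)).le)
      ht ht1
  have hprod : 0 ≤ (∏ j, a j ^ s) ^ (1 + t) :=
    Real.rpow_nonneg (Finset.prod_nonneg fun j _ ↦ Real.rpow_nonneg (ha j).le s) _
  simp_rw [prod_rpow_add_mul_ite ha, ← Finset.mul_sum]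
  rw [mul_left_comm]
  refine le_mul_of_one_le_right hprod ?_
  rwa [inv_le_iff_one_le_mul₀' (Real.rpow_pos_of_pos hpos t)] at hsum

end HittingProb

/-- The moment `E[X ^ s]`, with real exponent, of a random variable `X` with law `ν`. -/
noncomputable def powMoment (ν : Measure ℝ) (s : ℝ) : ℝ :=
  ∫ x, x ^ s ∂ν

/-- The hitting probability `hittingProb` averaged over `n` independent weights of law `ν`, where
`ν` may also be a truncated law, of total mass less than `1`. -/
noncomputable def annealedHittingProb (ν : Measure ℝ) (n : ℕ) : ℝ :=
  ∫ a, hittingProb a ∂Measure.pi fun _ : Fin n ↦ ν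

section Annealed

variable {ν : Measure ℝ} {n : ℕ} {s t : ℝ}

theorem powMoment_nonneg (hν : ∀ᵐ x ∂ν, 0 < x) : 0 ≤ powMoment ν s :=
  integral_nonneg_of_ae <| hν.mono fun _ hx ↦ Real.rpow_nonneg hx.le s

theorem ae_pi_forall_pos [SigmaFinite ν] (hν : ∀ᵐ x ∂ν, 0 < x) :
    ∀ᵐ a ∂Measure.pi fun _ : Fin n ↦ ν, ∀ j, 0 < a j :=
  ae_all_iff.2 fun _ ↦ Measure.tendsto_eval_ae_ae.eventually hν

theorem integrable_hittingProb [IsFiniteMeasure ν] (hν : ∀ᵐ x ∂ν, 0 < x) :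
    Integrable hittingProb (Measure.pi fun _ : Fin n ↦ ν) := by
  refine Integrable.of_bound measurable_hittingProb.aestronglyMeasurable 1 ?_
  filter_upwards [ae_pi_forall_pos hν] with a ha
  rw [Real.norm_of_nonneg (hittingProb_pos ha).le]
  exact hittingProb_le_one ha

theorem annealedHittingProb_nonneg [SigmaFinite ν] (hν : ∀ᵐ x ∂ν, 0 < x) :
    0 ≤ annealedHittingProb ν n :=
  integral_nonneg_of_ae <| (ae_pi_forall_pos hν).mono fun _ ha ↦ (hittingProb_pos ha).le

theorem annealedHittingProb_pos [IsFiniteMeasure ν] [NeZero ν] (hν : ∀ᵐ x ∂ν, 0 < x) :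
    0 < annealedHittingProb ν n := by
  have hpos := (ae_pi_forall_pos (n := n) hν).mono fun _ ha ↦ hittingProb_pos ha
  have hsupport : Function.support (hittingProb (n := n))
      =ᵐ[Measure.pi fun _ : Fin n ↦ ν] Set.univ :=
    eventuallyEq_univ.2 <| hpos.mono fun _ ha ↦ ha.ne'
  rw [annealedHittingProb, integral_pos_iff_support_of_nonneg_ae
    (hpos.mono fun _ ha ↦ ha.le) (integrable_hittingProb hν), measure_congr hsupport,
    Measure.pi_univ]
  exact pos_iff_ne_zero.2 (Finset.prod_ne_zero_iff.2 fun _ _ ↦ NeZero.ne _)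

theorem annealedHittingProb_restrict_le [IsFiniteMeasure ν] (hν : ∀ᵐ x ∂ν, 0 < x) (S : Set ℝ) :
    annealedHittingProb (ν.restrict S) n ≤ annealedHittingProb ν n := by
  simp only [annealedHittingProb]
  rw [← Measure.restrict_pi_pi]
  exact setIntegral_le_integral (integrable_hittingProb hν) <|
    (ae_pi_forall_pos hν).mono fun _ ha ↦ (hittingProb_pos ha).le

theorem integrable_rpow_of_mem_Icc [IsFiniteMeasure ν] (hν : ∀ᵐ x ∂ν, 0 < x)
    (hint : Integrable id ν) (hs : s ∈ Set.Icc (0 : ℝ) 1) :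
    Integrable (fun x : ℝ ↦ x ^ s) ν := by
  refine ((integrable_const 1).add hint).mono' (by fun_prop) ?_
  filter_upwards [hν] with x hx
  rw [Real.norm_of_nonneg (Real.rpow_nonneg hx.le s)]
  exact rpow_le_one_add hx.le hs

theorem annealedHittingProb_le_powMoment_pow [IsFiniteMeasure ν] (hν : ∀ᵐ x ∂ν, 0 < x)
    (hint : Integrable id ν) (hs : s ∈ Set.Icc (0 : ℝ) 1) :
    annealedHittingProb ν n ≤ powMoment ν s ^ n :=
  calc annealedHittingProb ν n
      ≤ ∫ a, ∏ j, a j ^ s ∂Measure.pi fun _ : Fin n ↦ ν :=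
        integral_mono_ae (integrable_hittingProb hν)
          (Integrable.fintype_prod fun _ ↦ integrable_rpow_of_mem_Icc hν hint hs)
          ((ae_pi_forall_pos hν).mono fun _ ha ↦ hittingProb_le_prod_rpow ha hs)
    _ = powMoment ν s ^ n := by
        rw [integral_fintype_prod_eq_pow (fun x : ℝ ↦ x ^ s), Fintype.card_fin, powMoment]

theorem powMoment_pow_rpow_le [IsFiniteMeasure ν] (hν : ∀ᵐ x ∂ν, 0 < x)
    (hmom : ∀ u : ℝ, Integrable (fun x ↦ x ^ u) ν) (ht : 0 < t) (ht1 : t ≤ 1) :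
    (powMoment ν s ^ n) ^ (1 + t) ≤ annealedHittingProb ν n ^ t *
      ∑ r ∈ Finset.range (n + 1),
        ∏ j : Fin n, powMoment ν (s + t * (if j.val < r then s - 1 else s)) := by
  have hprod (u : Fin n → ℝ) :
      Integrable (fun a : Fin n → ℝ ↦ ∏ j, a j ^ u j) (Measure.pi fun _ ↦ ν) :=
    Integrable.fintype_prod (f := fun j x ↦ x ^ u j) fun j ↦ hmom (u j)
  have hprod0 (u : Fin n → ℝ) :
      ∀ᵐ a ∂Measure.pi fun _ : Fin n ↦ ν, 0 ≤ ∏ j, a j ^ u j :=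
    (ae_pi_forall_pos hν).mono fun _ ha ↦
      Finset.prod_nonneg fun j _ ↦ Real.rpow_nonneg (ha j).le _
  have hfubini (u : Fin n → ℝ) :
      ∏ j, powMoment ν (u j) = ∫ a, ∏ j, a j ^ u j ∂Measure.pi fun _ : Fin n ↦ ν :=
    (integral_fintype_prod_eq_prod fun j x ↦ x ^ u j).symm
  have hpow : powMoment ν s ^ n = ∏ _j : Fin n, powMoment ν s := by simp
  simp_rw [hpow, hfubini]
  rw [← integral_finsetSum _ fun _ _ ↦ hprod _]
  exact integral_rpow_le_of_rpow_le ht.le (hprod0 _)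
    ((ae_pi_forall_pos hν).mono fun _ ha ↦ (hittingProb_pos ha).le)
    ((ae_pi_forall_pos hν).mono fun _ ha ↦ Finset.sum_nonneg fun _ _ ↦
      Finset.prod_nonneg fun j _ ↦ Real.rpow_nonneg (ha j).le _)
    (hprod _) (integrable_hittingProb hν) (integrable_finsetSum _ fun _ _ ↦ hprod _)
    ((ae_pi_forall_pos hν).mono fun _ ha ↦ prod_rpow_rpow_le_hittingProb_rpow_mul ha ht ht1)

theorem le_mul_log_annealedHittingProb [IsFiniteMeasure ν] {m : ℝ} (hν : ∀ᵐ x ∂ν, 0 < x)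
    (hmom : ∀ u : ℝ, Integrable (fun x ↦ x ^ u) ν) (ht : 0 < t) (ht1 : t ≤ 1)
    (hs : 0 < powMoment ν s) (hm : 0 < m) (hm0 : powMoment ν (s + t * s) ≤ m)
    (hm1 : powMoment ν (s + t * (s - 1)) ≤ m) :
    n * ((1 + t) * Real.log (powMoment ν s) - Real.log m) ≤
      t * Real.log (annealedHittingProb ν n) + Real.log (n + 1) := by
  have hsum : ∑ r ∈ Finset.range (n + 1),
      ∏ j : Fin n, powMoment ν (s + t * (if j.val < r then s - 1 else s)) ≤ (n + 1) * m ^ n := by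
    have hprod (r : ℕ) :
        ∏ j : Fin n, powMoment ν (s + t * (if j.val < r then s - 1 else s)) ≤ m ^ n := by
      refine (Finset.prod_le_prod (g := fun _ ↦ m) (fun _ _ ↦ powMoment_nonneg hν)
        fun j _ ↦ ?_).trans_eq (by simp)
      split_ifs
      exacts [hm1, hm0]
    simpa using Finset.sum_le_card_nsmul (Finset.range (n + 1)) _ _ fun r _ ↦ hprod r
  have hI0 : 0 ≤ annealedHittingProb ν n := annealedHittingProb_nonneg hν
  have hle := (powMoment_pow_rpow_le hν hmom ht ht1).trans
    (mul_le_mul_of_nonneg_left hsum (Real.rpow_nonneg hI0 t))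
  have hlhs : 0 < (powMoment ν s ^ n) ^ (1 + t) := by positivity
  have hI : 0 < annealedHittingProb ν n := hI0.lt_of_ne' fun h ↦ by
    rw [h, Real.zero_rpow ht.ne', zero_mul] at hle
    exact hle.not_gt hlhs
  have hlog := Real.log_le_log hlhs hle
  rw [Real.log_rpow (by positivity), Real.log_mul (by positivity) (by positivity),
    Real.log_rpow hI, Real.log_mul (by positivity) (by positivity), Real.log_pow,
    Real.log_pow] at hlog
  linarith

theorem rpow_ae_eq_exp_mul_log (hν : ∀ᵐ x ∂ν, 0 < x) (s : ℝ) :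
    (fun x ↦ x ^ s) =ᵐ[ν] fun x ↦ Real.exp (s * Real.log x) :=
  hν.mono fun x hx ↦ by simp only [Real.rpow_def_of_pos hx, mul_comm]

theorem aecover_Icc_exp (hν : ∀ᵐ x ∂ν, 0 < x) :
    AECover ν atTop fun m : ℕ ↦ Set.Icc (Real.exp (-m)) (Real.exp m) where
  ae_eventually_mem := by
    filter_upwards [hν] with x hx
    filter_upwards [eventually_ge_atTop ⌈|Real.log x|⌉₊] with m hm
    rw [Set.mem_Icc, ← Real.le_log_iff_exp_le hx, ← Real.log_le_iff_le_exp hx]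
    exact abs_le.1 (Nat.ceil_le.1 hm)
  measurableSet _ := measurableSet_Icc

variable [IsFiniteMeasure ν] {a b c : ℝ}

theorem integrable_exp_mul_log_of_mem_Icc (ha : 0 < a) (hν : ∀ᵐ x ∂ν, x ∈ Set.Icc a b) (s : ℝ) :
    Integrable (fun x ↦ Real.exp (s * Real.log x)) ν :=
  integrable_exp_mul_of_mem_Icc Real.measurable_log.aemeasurable <| hν.mono fun _ hx ↦
    ⟨Real.log_le_log ha hx.1, Real.log_le_log (ha.trans_le hx.1) hx.2⟩

theorem differentiable_powMoment_of_mem_Icc (ha : 0 < a) (hν : ∀ᵐ x ∂ν, x ∈ Set.Icc a b) :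
    Differentiable ℝ (powMoment ν) := by
  have hmgf : powMoment ν = mgf Real.log ν := funext fun s ↦
    integral_congr_ae (rpow_ae_eq_exp_mul_log (hν.mono fun _ hx ↦ ha.trans_le hx.1) s)
  have huniv : integrableExpSet Real.log ν = Set.univ :=
    Set.eq_univ_of_forall (integrable_exp_mul_log_of_mem_Icc ha hν)
  intro s
  rw [hmgf]
  exact differentiableAt_mgf (by simp [huniv])

theorem exists_mul_lt_log_powMoment_of_mem_Icc (ha : 0 < a) (hν : ∀ᵐ x ∂ν, x ∈ Set.Icc a b)
    (hc : ∀ s ∈ Set.Icc (0 : ℝ) 1, Real.exp c < powMoment ν s) :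
    ∃ s t m : ℝ, 0 < t ∧ t ≤ 1 ∧ 0 < powMoment ν s ∧ 0 < m ∧ powMoment ν (s + t * s) ≤ m ∧
      powMoment ν (s + t * (s - 1)) ≤ m ∧
      t * c < (1 + t) * Real.log (powMoment ν s) - Real.log m := by
  have hdiff := differentiable_powMoment_of_mem_Icc ha hν
  obtain ⟨s, hs, hmin⟩ := isCompact_Icc.exists_isMinOn (Set.nonempty_Icc.2 zero_le_one)
    hdiff.continuous.continuousOn
  have hφ : 0 < powMoment ν s := (Real.exp_pos c).trans (hc s hs)
  set δ := (Real.log (powMoment ν s) - c) / 2 with hδ_def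
  have hδ : 0 < δ := half_pos (sub_pos.2 ((Real.lt_log_iff_exp_lt hφ).2 (hc s hs)))
  have hnear {y : ℝ} (hy : y ∈ Set.Icc (0 : ℝ) 1) :=
    eventually_le_add_mul_of_isMinOn (convex_Icc 0 1) hmin hs hy (hdiff s) (mul_pos hφ hδ)
  have hle_one : ∀ᶠ t : ℝ in 𝓝[>] 0, t ≤ 1 :=
    nhdsWithin_le_nhds (eventually_le_nhds zero_lt_one)
  have hpos : ∀ᶠ t : ℝ in 𝓝[>] 0, 0 < t := self_mem_nhdsWithin
  obtain ⟨t, hs0, hs1, ht1, ht⟩ := ((hnear (Set.left_mem_Icc.2 zero_le_one)).and <|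
    (hnear (Set.right_mem_Icc.2 zero_le_one)).and <| hle_one.and hpos).exists
  rw [sub_zero] at hs0
  refine ⟨s, t, powMoment ν s + powMoment ν s * δ * t, ht, ht1, hφ, by positivity, hs0, hs1, ?_⟩
  have hlog : Real.log (1 + δ * t) ≤ δ * t := by
    linarith [Real.log_le_sub_one_of_pos (show 0 < 1 + δ * t by positivity)]
  calc t * c < t * (Real.log (powMoment ν s) - δ) := by
        gcongr
        linarith [hδ_def]
    _ ≤ (1 + t) * Real.log (powMoment ν s) -
          (Real.log (powMoment ν s) + Real.log (1 + δ * t)) := by linarith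
    _ = (1 + t) * Real.log (powMoment ν s) -
          Real.log (powMoment ν s + powMoment ν s * δ * t) := by
        rw [← Real.log_mul (by positivity) (by positivity)]
        ring_nf

theorem eventually_lt_log_annealedHittingProb_of_mem_Icc (ha : 0 < a)
    (hν : ∀ᵐ x ∂ν, x ∈ Set.Icc a b)
    (hc : ∀ s ∈ Set.Icc (0 : ℝ) 1, Real.exp c < powMoment ν s) :
    ∀ᶠ n : ℕ in atTop, c < 1 / (n : ℝ) * Real.log (annealedHittingProb ν n) := by
  have hpos : ∀ᵐ x ∂ν, 0 < x := hν.mono fun _ hx ↦ ha.trans_le hx.1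
  have hmom (u : ℝ) : Integrable (fun x ↦ x ^ u) ν :=
    (integrable_exp_mul_log_of_mem_Icc ha hν u).congr (rpow_ae_eq_exp_mul_log hpos u).symm
  obtain ⟨s, t, m, ht, ht1, hφ, hm, hm0, hm1, hgap⟩ :=
    exists_mul_lt_log_powMoment_of_mem_Icc ha hν hc
  filter_upwards [eventually_gt_atTop 0,
    tendsto_log_add_one_div_atTop.eventually_lt_const (sub_pos.2 hgap)] with n hn hlogn
  have hn0 : (0 : ℝ) < n := Nat.cast_pos.2 hn
  have hbound := le_mul_log_annealedHittingProb (n := n) hpos hmom ht ht1 hφ hm hm0 hm1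
  rw [div_lt_iff₀ hn0] at hlogn
  rw [one_div, lt_inv_mul_iff₀ hn0]
  refine lt_of_mul_lt_mul_left ?_ ht.le
  linarith

theorem powMoment_sub_powMoment_restrict_le (hν : ∀ᵐ x ∂ν, 0 < x) (hint : Integrable id ν)
    {s : ℝ} (hs : s ∈ Set.Icc (0 : ℝ) 1) {S : Set ℝ} (hS : MeasurableSet S) :
    powMoment ν s - powMoment (ν.restrict S) s ≤ ∫ x, (1 + x) ∂ν - ∫ x in S, (1 + x) ∂ν := by
  have hpow := integrable_rpow_of_mem_Icc hν hint hs
  have hlin : Integrable (fun x : ℝ ↦ 1 + x) ν := (integrable_const 1).add hint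
  simp only [powMoment]
  rw [← setIntegral_compl hS hpow, ← setIntegral_compl hS hlin]
  exact setIntegral_mono_ae hpow.integrableOn hlin.integrableOn <|
    hν.mono fun x hx ↦ rpow_le_one_add hx.le hs

theorem exists_forall_lt_powMoment_restrict {c' : ℝ} (hν : ∀ᵐ x ∂ν, 0 < x)
    (hint : Integrable id ν) (hcc' : c < c') (hc' : ∀ s ∈ Set.Icc (0 : ℝ) 1, c' ≤ powMoment ν s) :
    ∃ a b : ℝ, 0 < a ∧
      ∀ s ∈ Set.Icc (0 : ℝ) 1, c < powMoment (ν.restrict (Set.Icc a b)) s := by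
  have hlim := (aecover_Icc_exp hν).integral_tendsto_of_countably_generated
    ((integrable_const 1).add hint)
  obtain ⟨m, hm⟩ := (hlim.eventually_const_lt (sub_lt_self _ (sub_pos.2 hcc'))).exists
  refine ⟨Real.exp (-m), Real.exp m, Real.exp_pos _, fun s hs ↦ ?_⟩
  have hloss := powMoment_sub_powMoment_restrict_le hν hint hs
    (measurableSet_Icc (a := Real.exp (-m)) (b := Real.exp m))
  simp only [Pi.add_apply, id] at hm
  linarith [hc' s hs]

theorem eventually_lt_log_annealedHittingProb {c' : ℝ} (hν : ∀ᵐ x ∂ν, 0 < x)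
    (hint : Integrable id ν) (hcc' : Real.exp c < c')
    (hc' : ∀ s ∈ Set.Icc (0 : ℝ) 1, c' ≤ powMoment ν s) :
    ∀ᶠ n : ℕ in atTop, c < 1 / (n : ℝ) * Real.log (annealedHittingProb ν n) := by
  obtain ⟨a, b, ha, hlt⟩ := exists_forall_lt_powMoment_restrict hν hint hcc' hc'
  have hne : NeZero (ν.restrict (Set.Icc a b)) := ⟨fun h ↦ by
    have hzero := hlt 0 (Set.left_mem_Icc.2 zero_le_one)
    rw [h, powMoment, integral_zero_measure] at hzero
    exact hzero.not_gt (Real.exp_pos c)⟩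
  filter_upwards [eventually_lt_log_annealedHittingProb_of_mem_Icc ha
    (ae_restrict_mem measurableSet_Icc) hlt] with n hn
  refine hn.trans_le ?_
  gcongr
  · exact annealedHittingProb_pos (ae_restrict_of_ae hν)
  · exact annealedHittingProb_restrict_le hν _

theorem log_annealedHittingProb_le [NeZero ν] {n : ℕ} {s : ℝ} (hν : ∀ᵐ x ∂ν, 0 < x)
    (hint : Integrable id ν) (hs : s ∈ Set.Icc (0 : ℝ) 1) (hn : n ≠ 0) :
    1 / (n : ℝ) * Real.log (annealedHittingProb ν n) ≤ Real.log (powMoment ν s) := by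
  have hn0 : (0 : ℝ) < n := Nat.cast_pos.2 (Nat.pos_of_ne_zero hn)
  rw [one_div, inv_mul_le_iff₀ hn0, ← Real.log_pow]
  exact Real.log_le_log (annealedHittingProb_pos hν)
    (annealedHittingProb_le_powMoment_pow hν hint hs)

theorem iInf_powMoment_pos [NeZero ν] (hν : ∀ᵐ x ∂ν, 0 < x) (hint : Integrable id ν) :
    0 < ⨅ s : Set.Icc (0 : ℝ) 1, powMoment ν s :=
  (annealedHittingProb_pos (n := 1) hν).trans_le <| le_ciInf fun s ↦ by
    simpa using annealedHittingProb_le_powMoment_pow (n := 1) hν hint s.2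

theorem tendsto_log_annealedHittingProb [NeZero ν] (hν : ∀ᵐ x ∂ν, 0 < x) (hint : Integrable id ν) :
    Tendsto (fun n : ℕ ↦ 1 / (n : ℝ) * Real.log (annealedHittingProb ν n)) atTop
      (𝓝 (Real.log (⨅ s : Set.Icc (0 : ℝ) 1, powMoment ν s))) := by
  have hinf := iInf_powMoment_pos hν hint
  have hinf_le (s : Set.Icc (0 : ℝ) 1) : ⨅ s : Set.Icc (0 : ℝ) 1, powMoment ν s ≤ powMoment ν s :=
    ciInf_le ⟨0, Set.forall_mem_range.2 fun _ ↦ powMoment_nonneg hν⟩ s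
  refine tendsto_order.2 ⟨fun c hc ↦ ?_, fun c hc ↦ ?_⟩
  · exact eventually_lt_log_annealedHittingProb hν hint ((Real.lt_log_iff_exp_lt hinf).1 hc)
      fun s hs ↦ hinf_le ⟨s, hs⟩
  · obtain ⟨s, hs⟩ := exists_lt_of_ciInf_lt ((Real.log_lt_iff_lt_exp hinf).1 hc)
    filter_upwards [eventually_ne_atTop 0] with n hn
    exact (log_annealedHittingProb_le hν hint s.2 hn).trans_lt
      ((Real.log_lt_iff_lt_exp (hinf.trans_le (hinf_le s))).2 hs)

end Annealed

theorem hittingProb_comp_fin (n : ℕ) (a : ℕ → ℝ) :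
    hittingProb (fun j : Fin n ↦ a j) =
      (∑ r ∈ Finset.range (n + 1), ∏ j ∈ Finset.range r, (a j)⁻¹)⁻¹ := by
  refine congrArg _ (Finset.sum_congr rfl fun r hr ↦ ?_)
  rw [Finset.prod_filter, Fin.prod_univ_eq_prod_range (fun j ↦ if j < r then (a j)⁻¹ else 1) n,
    ← Finset.prod_filter]
  congr 1
  ext j
  simp only [Finset.mem_range, Finset.mem_filter] at hr ⊢
  omega

theorem integral_eq_annealedHittingProb {Ω : Type*} [MeasurableSpace Ω] {μ : Measure Ω}
    {A : ℕ → Ω → ℝ} (hindep : iIndepFun A μ)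
    (hident : ∀ j, IdentDistrib (A j) (A 0) μ μ) (n : ℕ) :
    ∫ ω, (∑ r ∈ Finset.range (n + 1), ∏ j ∈ Finset.range r, (A j ω)⁻¹)⁻¹ ∂μ =
      annealedHittingProb (μ.map (A 0)) n := by
  have hlaw (j : ℕ) : HasLaw (A j) (μ.map (A 0)) μ :=
    ⟨(hident j).aemeasurable_fst, (hident j).map_eq⟩
  rw [annealedHittingProb, ← (iIndepFun.hasLaw_pi (fun j : Fin n ↦ hlaw j)
    (hindep.precomp Fin.val_injective)).integral_comp
    measurable_hittingProb.aestronglyMeasurable]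
  exact integral_congr_ae (ae_of_all _ fun ω ↦ (hittingProb_comp_fin n fun j ↦ A j ω).symm)

theorem annealed_hitting_exponential_rate_general
    {Ω : Type*} [MeasurableSpace Ω] (μ : Measure Ω) [IsProbabilityMeasure μ]
    (A : ℕ → Ω → ℝ)
    (hindep : iIndepFun A μ)
    (hident : ∀ j, IdentDistrib (A j) (A 0) μ μ)
    (hpos : ∀ᵐ ω ∂μ, 0 < A 0 ω)
    (hint : Integrable (A 0) μ) :
    Tendsto
      (fun n : ℕ => (1 / (n : ℝ)) *
        Real.log (∫ ω,
          (∑ r ∈ Finset.range (n + 1), ∏ j ∈ Finset.range r, (A j ω)⁻¹)⁻¹ ∂μ))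
      atTop
      (𝓝 (Real.log (⨅ l : Set.Icc (0 : ℝ) 1, ∫ ω, A 0 ω ^ (l : ℝ) ∂μ))) := by
  have hA : AEMeasurable (A 0) μ := hint.aemeasurable
  have : IsProbabilityMeasure (μ.map (A 0)) := Measure.isProbabilityMeasure_map hA
  have hmoment (s : ℝ) : ∫ ω, A 0 ω ^ s ∂μ = powMoment (μ.map (A 0)) s :=
    (integral_map hA (measurable_id.pow_const s).aestronglyMeasurable).symm
  simp_rw [integral_eq_annealedHittingProb hindep hident, hmoment]
  exact tendsto_log_annealedHittingProb
    ((ae_map_iff hA measurableSet_Ioi).2 hpos)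
    ((integrable_map_measure aestronglyMeasurable_id hA).2 hint)

/-- Let `(A_j)_{j ≥ 1}` be i.i.d. strictly positive random variables (here `A j` stands for
`A_{j+1}`, so `A 0` is `A_1`) with `E[A_1 ^ λ] < ∞` for every `λ ∈ ℝ`. Then
`(1/n) * ln E[(∑_{r=0}^n ∏_{j=1}^r A_j⁻¹)⁻¹]` converges, as `n → ∞`, to
`ln (inf_{λ ∈ [0,1]} E[A_1 ^ λ])`. -/
theorem annealed_hitting_exponential_rate
    {Ω : Type*} [MeasurableSpace Ω] (μ : Measure Ω) [IsProbabilityMeasure μ]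
    (A : ℕ → Ω → ℝ)
    (hmeas : ∀ j, Measurable (A j))
    (hindep : ProbabilityTheory.iIndepFun A μ)
    (hident : ∀ j, ProbabilityTheory.IdentDistrib (A j) (A 0) μ μ)
    (hpos : ∀ j ω, 0 < A j ω)
    (hmom : ∀ l : ℝ, Integrable (fun ω => A 0 ω ^ l) μ) :
    Filter.Tendsto
      (fun n : ℕ => (1 / (n : ℝ)) *
        Real.log (∫ ω,
          (∑ r ∈ Finset.range (n + 1), ∏ j ∈ Finset.range r, (A j ω)⁻¹)⁻¹ ∂μ))
      Filter.atTop
      (nhds (Real.log (⨅ l : Set.Icc (0:ℝ) 1, ∫ ω, A 0 ω ^ (l : ℝ) ∂μ))) :=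
  annealed_hitting_exponential_rate_general μ A hindep hident (ae_of_all _ (hpos 0))
    (by simpa only [Real.rpow_one] using hmom 1)
end

section
/- Let φ : ℝ → ℝ be convex with φ(0) = 0. Then sup_{f ∈ AC₀} J(f) = inf_{λ ∈ [0,1]} φ(λ), i.e. the supremum over all f ∈ AC₀ of ( min_{t ∈ [0,1]} f(t) − ∫_0^1 Λ*(f′(u)) du ) equals the infimum of φ over [0,1]. -/
open MeasureTheory

/-- The Legendre transform `Λ*(x) = sup_{λ ∈ ℝ} (λ x - φ(λ))`, with values in `[0, +∞]`
(note that the supremum is nonnegative since `φ 0 = 0`). -/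
noncomputable def legendreTransform (φ : ℝ → ℝ) (x : ℝ) : ENNReal :=
  ⨆ l : ℝ, ENNReal.ofReal (l * x - φ l)

/-- For `f ∈ AC₀` represented by an integrable `g` on `[0,1]` via `f t = ∫_0^t g`,
this is `I(f) = ∫_0^1 Λ*(g(u)) du ∈ [0, +∞]`. -/
noncomputable def rateACZero (φ : ℝ → ℝ) (g : ℝ → ℝ) : ENNReal :=
  ∫⁻ u in Set.Icc (0:ℝ) 1, legendreTransform φ (g u)

/-- `J(f) = min_{t ∈ [0,1]} f(t) - I(f) ∈ [-∞, +∞)`, with `J(f) = -∞` when `I(f) = +∞`,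
for `f ∈ AC₀` given by `f t = ∫_0^t g`. -/
noncomputable def JACZero (φ : ℝ → ℝ) (g : ℝ → ℝ) : EReal :=
  ((sInf ((fun t => ∫ u in (0:ℝ)..t, g u) '' Set.Icc (0:ℝ) 1) : ℝ) : EReal) -
    (rateACZero φ g : EReal)

/-!
Every path `f` satisfies `min f ≤ (1 - x) f(0) + x f(1) = x f(1)` for `x ∈ [0, 1]`, while integrating
the Fenchel–Young inequality gives `x f(1) - φ(x) ≤ I(f)`; hence `J(f) ≤ φ(x)`. Conversely, let `x`
minimise `φ` on `[0, 1]`. Separating the strict epigraph of `φ` from `[0, 1] × (-∞, φ(x)]` yields a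
subgradient `c` of `φ` at `x` with `c x ≤ c t` for all `t ∈ [0, 1]`. The linear path `f(t) = c t` then
has minimum `c x` and cost `Λ*(c) = c x - φ(x)`, so `J(f) = φ(x)`.
-/

section Subgradient

variable {E : Type*} [AddCommGroup E] [Module ℝ E] [TopologicalSpace E]

/-- The continuous linear functional `c` is a subgradient of `φ` at `x`: the affine function of
slope `c` that agrees with `φ` at `x` lies below `φ`. Slopes live in the dual, so that on `ℝ` the
numerical slope is `c 1`. -/
def IsSubgradientAt (φ : E → ℝ) (c : StrongDual ℝ E) (x : E) : Prop :=
  ∀ y, φ x + c (y - x) ≤ φ y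

variable [IsTopologicalAddGroup E] [ContinuousSMul ℝ E]

theorem exists_separating_strict_epigraph_of_isMinOn {φ : E → ℝ} (hconv : ConvexOn ℝ Set.univ φ)
    (hcont : Continuous φ) {s : Set E} (hs : Convex ℝ s) {x : E} (hmin : IsMinOn φ s x) :
    ∃ (F : StrongDual ℝ (E × ℝ)) (u : ℝ),
      (∀ y r, φ y < r → F (y, r) < u) ∧ ∀ z ∈ s, ∀ r ≤ φ x, u ≤ F (z, r) := by
  have hepi_convex : Convex ℝ {p : E × ℝ | φ p.1 < p.2} := by
    simpa using hconv.convex_strict_epigraph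
  have hepi_open : IsOpen {p : E × ℝ | φ p.1 < p.2} :=
    isOpen_lt (hcont.comp continuous_fst) continuous_snd
  have hdisj : Disjoint {p : E × ℝ | φ p.1 < p.2} (s ×ˢ Set.Iic (φ x)) :=
    Set.disjoint_left.2 fun p hlt hmem =>
      (lt_of_lt_of_le hlt hmem.2).not_ge (isMinOn_iff.1 hmin p.1 hmem.1)
  obtain ⟨F, u, hepi, hbox⟩ :=
    geometric_hahn_banach_open hepi_convex hepi_open (hs.prod (convex_Iic (φ x))) hdisj
  exact ⟨F, u, fun y r hr => hepi (y, r) hr, fun z hz r hr => hbox (z, r) ⟨hz, hr⟩⟩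

theorem exists_isSubgradientAt_of_isMinOn {φ : E → ℝ} (hconv : ConvexOn ℝ Set.univ φ)
    (hcont : Continuous φ) {s : Set E} (hs : Convex ℝ s) {x : E} (hx : x ∈ s)
    (hmin : IsMinOn φ s x) :
    ∃ c : StrongDual ℝ E, IsSubgradientAt φ c x ∧ IsMinOn c s x := by
  obtain ⟨F, u, hepi, hbox⟩ :=
    exists_separating_strict_epigraph_of_isMinOn hconv hcont hs hmin
  set q : ℝ := F (0, 1)
  set G : StrongDual ℝ E := F.comp (.inl ℝ E ℝ)
  have hF (y : E) (r : ℝ) : F (y, r) = G y + r * q := by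
    have hsplit : ((y, r) : E × ℝ) = (y, 0) + r • (0, 1) := by simp
    rw [hsplit, map_add, map_smul, smul_eq_mul]
    rfl
  simp only [hF] at hepi hbox
  have hq : q < 0 := by
    linarith [hepi x (φ x + 1) (lt_add_one _), hbox x hx (φ x) le_rfl]
  have hepi_closed (y : E) : G y + φ y * q ≤ u := by
    have hlim : Filter.Tendsto (fun r => G y + r * q) (nhdsWithin (φ y) (Set.Ioi (φ y)))
        (nhds (G y + φ y * q)) :=
      (Continuous.tendsto (by fun_prop) _).mono_left nhdsWithin_le_nhds
    exact le_of_tendsto hlim (eventually_mem_nhdsWithin.mono fun r hr => (hepi y r hr).le)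
  refine ⟨(-q)⁻¹ • G, fun y => ?_, fun z hz => ?_⟩
  · have hslope : G (y - x) ≤ (φ y - φ x) * -q := by
      rw [map_sub]
      linarith [hepi_closed y, hbox x hx (φ x) le_rfl]
    have hdiv : (-q)⁻¹ * G (y - x) ≤ φ y - φ x :=
      (inv_mul_le_iff₀' (neg_pos.2 hq)).2 hslope
    simp only [smul_apply, smul_eq_mul]
    linarith
  · have hGle : G x ≤ G z := by linarith [hepi_closed x, hbox z hz (φ x) le_rfl]
    exact mul_le_mul_of_nonneg_left hGle (inv_nonneg.2 (neg_nonneg.2 hq.le))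

end Subgradient

theorem csInf_le_of_mem_convexHull {s : Set ℝ} (hs : BddBelow s) {y : ℝ}
    (hy : y ∈ convexHull ℝ s) : sInf s ≤ y :=
  convexHull_min (fun _ hz => csInf_le hs hz) (convex_Ici (sInf s)) hy

theorem ofReal_integral_le_lintegral_ofReal {α : Type*} [MeasurableSpace α] (μ : Measure α)
    (f : α → ℝ) : ENNReal.ofReal (∫ a, f a ∂μ) ≤ ∫⁻ a, ENNReal.ofReal (f a) ∂μ := by
  by_cases hf : Integrable f μ
  · calc ENNReal.ofReal (∫ a, f a ∂μ)
        ≤ ENNReal.ofReal (∫ a, max (f a) 0 ∂μ) :=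
          ENNReal.ofReal_le_ofReal (integral_mono hf hf.pos_part fun a => le_max_left _ _)
      _ = ∫⁻ a, ENNReal.ofReal (max (f a) 0) ∂μ :=
          ofReal_integral_eq_lintegral_ofReal hf.pos_part (.of_forall fun a => le_max_right _ _)
      _ = ∫⁻ a, ENNReal.ofReal (f a) ∂μ := by simp [ENNReal.ofReal_max]
  · simp [integral_undef hf]

theorem ofReal_mul_sub_le_legendreTransform (φ : ℝ → ℝ) (l x : ℝ) :
    ENNReal.ofReal (l * x - φ l) ≤ legendreTransform φ x :=
  le_iSup (fun l => ENNReal.ofReal (l * x - φ l)) l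

theorem strongDual_real_apply (c : StrongDual ℝ ℝ) (y : ℝ) : c y = y * c 1 := by
  simpa using c.map_smul y 1

theorem IsSubgradientAt.legendreTransform_eq {φ : ℝ → ℝ} {c : StrongDual ℝ ℝ} {x : ℝ}
    (hc : IsSubgradientAt φ c x) :
    legendreTransform φ (c 1) = ENNReal.ofReal (c x - φ x) := by
  refine le_antisymm (iSup_le fun l => ENNReal.ofReal_le_ofReal ?_) ?_
  · have hl := hc l
    rw [map_sub] at hl
    linarith [strongDual_real_apply c l]
  · rw [strongDual_real_apply c x]
    exact ofReal_mul_sub_le_legendreTransform φ x (c 1)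

theorem rateACZero_const (φ : ℝ → ℝ) (x : ℝ) :
    rateACZero φ (fun _ => x) = legendreTransform φ x := by
  simp [rateACZero]

theorem ofReal_mul_integral_sub_le_rateACZero (φ : ℝ → ℝ) {g : ℝ → ℝ}
    (hg : IntegrableOn g (Set.Icc 0 1)) (l : ℝ) :
    ENNReal.ofReal (l * (∫ u in (0 : ℝ)..1, g u) - φ l) ≤ rateACZero φ g := by
  have hintegral : ∫ u in Set.Icc (0 : ℝ) 1, (l * g u - φ l) =
      l * (∫ u in (0 : ℝ)..1, g u) - φ l := by
    rw [integral_sub (hg.const_mul l) (by simp), integral_const_mul,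
      intervalIntegral.integral_of_le zero_le_one, integral_Icc_eq_integral_Ioc]
    simp
  calc ENNReal.ofReal (l * (∫ u in (0 : ℝ)..1, g u) - φ l)
      = ENNReal.ofReal (∫ u in Set.Icc (0 : ℝ) 1, (l * g u - φ l)) := by rw [hintegral]
    _ ≤ ∫⁻ u in Set.Icc (0 : ℝ) 1, ENNReal.ofReal (l * g u - φ l) :=
        ofReal_integral_le_lintegral_ofReal _ _
    _ ≤ rateACZero φ g :=
        lintegral_mono fun u => ofReal_mul_sub_le_legendreTransform φ l (g u)

theorem csInf_image_primitive_le_mul_integral {g : ℝ → ℝ} (hg : IntegrableOn g (Set.Icc 0 1))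
    {x : ℝ} (hx : x ∈ Set.Icc (0 : ℝ) 1) :
    sInf ((fun t => ∫ u in (0 : ℝ)..t, g u) '' Set.Icc (0 : ℝ) 1) ≤ x * ∫ u in (0 : ℝ)..1, g u := by
  set f : ℝ → ℝ := fun t => ∫ u in (0 : ℝ)..t, g u
  have hcont : ContinuousOn f (Set.Icc 0 1) := by
    rw [← Set.uIcc_of_le zero_le_one] at hg ⊢
    exact intervalIntegral.continuousOn_primitive_interval hg
  have hbdd : BddBelow (f '' Set.Icc 0 1) := (isCompact_Icc.image_of_continuousOn hcont).bddBelow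
  refine csInf_le_of_mem_convexHull hbdd (segment_subset_convexHull
    (Set.mem_image_of_mem f (Set.left_mem_Icc.2 zero_le_one))
    (Set.mem_image_of_mem f (Set.right_mem_Icc.2 zero_le_one)) ?_)
  exact ⟨1 - x, x, sub_nonneg.2 hx.2, hx.1, sub_add_cancel 1 x, by simp [f]⟩

theorem JACZero_le (φ : ℝ → ℝ) {g : ℝ → ℝ} (hg : IntegrableOn g (Set.Icc 0 1)) {x : ℝ}
    (hx : x ∈ Set.Icc (0 : ℝ) 1) : JACZero φ g ≤ φ x := by
  refine EReal.sub_le_of_le_add ?_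
  calc ((sInf ((fun t => ∫ u in (0 : ℝ)..t, g u) '' Set.Icc (0 : ℝ) 1) : ℝ) : EReal)
      ≤ ((x * ∫ u in (0 : ℝ)..1, g u : ℝ) : EReal) :=
        EReal.coe_le_coe (csInf_image_primitive_le_mul_integral hg hx)
    _ = (φ x : EReal) + ((x * (∫ u in (0 : ℝ)..1, g u) - φ x : ℝ) : EReal) := by
        rw [← EReal.coe_add, add_sub_cancel]
    _ ≤ φ x + ENNReal.ofReal (x * (∫ u in (0 : ℝ)..1, g u) - φ x) := by
        rw [EReal.coe_ennreal_ofReal]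
        gcongr
        exact le_max_left _ _
    _ ≤ φ x + rateACZero φ g := by
        gcongr
        exact_mod_cast ofReal_mul_integral_sub_le_rateACZero φ hg x

theorem csInf_image_primitive_dual_of_isMinOn {c : StrongDual ℝ ℝ} {s : Set ℝ} {x : ℝ}
    (hx : x ∈ s) (hmin : IsMinOn c s x) :
    sInf ((fun t => ∫ _ in (0 : ℝ)..t, c 1) '' s) = c x := by
  have hpath : (fun t => ∫ _ in (0 : ℝ)..t, c 1) = c := by
    ext t
    simp [strongDual_real_apply c t]
  rw [hpath]
  exact IsLeast.csInf_eq ⟨Set.mem_image_of_mem c hx, Set.forall_mem_image.2 hmin⟩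

theorem IsSubgradientAt.JACZero_const_eq {φ : ℝ → ℝ} (h0 : φ 0 ≤ 0) {c : StrongDual ℝ ℝ} {x : ℝ}
    (hc : IsSubgradientAt φ c x) (hx : x ∈ Set.Icc (0 : ℝ) 1) (hmin : IsMinOn c (Set.Icc 0 1) x) :
    JACZero φ (fun _ => c 1) = φ x := by
  have hcost : 0 ≤ c x - φ x := by
    have hzero := hc 0
    rw [zero_sub, map_neg] at hzero
    linarith
  rw [JACZero, csInf_image_primitive_dual_of_isMinOn hx hmin, rateACZero_const,
    hc.legendreTransform_eq, EReal.coe_ennreal_ofReal, max_eq_left hcost, ← EReal.coe_sub,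
    sub_sub_cancel]

theorem sup_J_eq_inf_phi_general (φ : ℝ → ℝ)
    (hconv : ConvexOn ℝ Set.univ φ) (h0 : φ 0 ≤ 0) :
    (⨆ (g : ℝ → ℝ) (_ : IntegrableOn g (Set.Icc (0 : ℝ) 1)), JACZero φ g) =
      ((⨅ l : Set.Icc (0 : ℝ) 1, φ l : ℝ) : EReal) := by
  have hcont : Continuous φ := continuousOn_univ.1 (hconv.continuousOn isOpen_univ)
  obtain ⟨x, hx, hmin⟩ :=
    isCompact_Icc.exists_isMinOn (Set.nonempty_Icc.2 zero_le_one) hcont.continuousOn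
  obtain ⟨c, hc, hcmin⟩ :=
    exists_isSubgradientAt_of_isMinOn hconv hcont (convex_Icc 0 1) hx hmin
  rw [hmin.iInf_eq hx]
  refine le_antisymm (iSup₂_le fun g hg => JACZero_le φ hg hx) ?_
  exact le_iSup₂_of_le (fun _ => c 1) (by simp) (hc.JACZero_const_eq h0 hx hcmin).ge

/-- For `φ : ℝ → ℝ` convex with `φ(0) = 0`,
`sup_{f ∈ AC₀} J(f) = inf_{λ ∈ [0,1]} φ(λ)`. -/
theorem sup_J_eq_inf_phi (φ : ℝ → ℝ)
    (hconv : ConvexOn ℝ Set.univ φ) (h0 : φ 0 = 0) :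
    (⨆ (g : ℝ → ℝ) (_ : IntegrableOn g (Set.Icc (0:ℝ) 1)), JACZero φ g) =
      ((⨅ l : Set.Icc (0:ℝ) 1, φ l : ℝ) : EReal) :=
  sup_J_eq_inf_phi_general φ hconv h0.le
end

section
/- Let a_1, a_2, … be strictly positive real numbers, and define q_0 := 0 and q_i := a_i / (1 + a_i − q_{i−1}) for i ≥ 1 (inductively, 0 ≤ q_{i−1} < 1 so the denominator is positive and 0 < q_i < 1). Then for every n ≥ 0, Π_{i=1}^{n} q_i = ( Σ_{r=0}^{n} Π_{j=1}^{r} a_j^{−1} )^{−1}, where empty products equal 1. -/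
/-!
Put `b_i = a_i⁻¹`, `P_n = b_1 ⋯ b_n` and `S_n = P_0 + ⋯ + P_n`. The recursion for `q` reads
`q_{n+1} (1 + b_{n+1} (1 - q_n)) = 1`, and it preserves the invariant `(1 - q_n) S_n = P_n`:
since `S_{n+1} = S_n + b_{n+1} P_n = S_n (1 + b_{n+1} (1 - q_n))`, the recursion gives
`q_{n+1} S_{n+1} = S_n`, whence `(1 - q_{n+1}) S_{n+1} = S_{n+1} - S_n = P_{n+1}`.
The relation `q_{n+1} S_{n+1} = S_n` makes the product of the `q_i` telescope to `S_0 / S_n`.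
-/

section CommRing

variable {R : Type*} [CommRing R] {b q : ℕ → R}

/-- The scale function at site `n` of the birth–death chain whose down/up ratio at site `i` is
`b (i + 1)`, normalized to be `0` at site `-1` and `1` at site `0`. -/
def birthDeathScale (b : ℕ → R) (n : ℕ) : R :=
  ∑ r ∈ Finset.range (n + 1), ∏ j ∈ Finset.Icc 1 r, b j

theorem birthDeathScale_zero (b : ℕ → R) : birthDeathScale b 0 = 1 := by
  simp [birthDeathScale]

theorem birthDeathScale_succ (b : ℕ → R) (n : ℕ) :
    birthDeathScale b (n + 1) = birthDeathScale b n + ∏ j ∈ Finset.Icc 1 (n + 1), b j :=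
  Finset.sum_range_succ _ _

theorem mul_birthDeathScale_succ_of_one_sub_mul {n : ℕ}
    (hq : q (n + 1) * (1 + b (n + 1) * (1 - q n)) = 1)
    (hn : (1 - q n) * birthDeathScale b n = ∏ j ∈ Finset.Icc 1 n, b j) :
    q (n + 1) * birthDeathScale b (n + 1) = birthDeathScale b n := by
  rw [birthDeathScale_succ, Finset.prod_Icc_succ_top (Nat.le_add_left 1 n), ← hn]
  linear_combination birthDeathScale b n * hq

theorem one_sub_mul_birthDeathScale (hq0 : q 0 = 0)
    (hq : ∀ i, q (i + 1) * (1 + b (i + 1) * (1 - q i)) = 1) (n : ℕ) :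
    (1 - q n) * birthDeathScale b n = ∏ j ∈ Finset.Icc 1 n, b j := by
  induction n with
  | zero => simp [hq0, birthDeathScale_zero]
  | succ n ih =>
    rw [sub_mul, one_mul, mul_birthDeathScale_succ_of_one_sub_mul (hq n) ih,
      birthDeathScale_succ, add_sub_cancel_left]

theorem prod_mul_birthDeathScale (hq0 : q 0 = 0)
    (hq : ∀ i, q (i + 1) * (1 + b (i + 1) * (1 - q i)) = 1) (n : ℕ) :
    (∏ i ∈ Finset.Icc 1 n, q i) * birthDeathScale b n = 1 := by
  induction n with
  | zero => simp [birthDeathScale_zero]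
  | succ n ih =>
    rw [Finset.prod_Icc_succ_top (Nat.le_add_left 1 n), mul_assoc,
      mul_birthDeathScale_succ_of_one_sub_mul (hq n) (one_sub_mul_birthDeathScale hq0 hq n), ih]

end CommRing

section OrderedField

variable {K : Type*} [Field K] [LinearOrder K] [IsStrictOrderedRing K] {a q : ℕ → K}

theorem birthDeath_hittingProb_lt_one (ha : ∀ i, 1 ≤ i → 0 < a i) (hq0 : q 0 < 1)
    (hq : ∀ i, q (i + 1) = a (i + 1) / (1 + a (i + 1) - q i)) (n : ℕ) : q n < 1 := by
  induction n with
  | zero => exact hq0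
  | succ n ih =>
    have hlt : a (n + 1) < 1 + a (n + 1) - q n := by linarith
    rw [hq, div_lt_one ((ha _ (Nat.le_add_left 1 n)).trans hlt)]
    exact hlt

theorem birthDeath_denominator_pos (ha : ∀ i, 1 ≤ i → 0 < a i) (hq0 : q 0 < 1)
    (hq : ∀ i, q (i + 1) = a (i + 1) / (1 + a (i + 1) - q i)) (n : ℕ) :
    0 < 1 + a (n + 1) - q n := by
  linarith [ha (n + 1) (Nat.le_add_left 1 n), birthDeath_hittingProb_lt_one ha hq0 hq n]

end OrderedField

theorem birth_death_hitting_product_general {K : Type*} [Field K] (a q : ℕ → K)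
    (ha : ∀ i, 1 ≤ i → a i ≠ 0)
    (hq0 : q 0 = 0)
    (hq : ∀ i : ℕ, q (i + 1) = a (i + 1) / (1 + a (i + 1) - q i))
    (hden : ∀ i : ℕ, 1 + a (i + 1) - q i ≠ 0) (n : ℕ) :
    ∏ i ∈ Finset.Icc 1 n, q i =
      (∑ r ∈ Finset.range (n + 1), ∏ j ∈ Finset.Icc 1 r, (a j)⁻¹)⁻¹ := by
  have hrec (i : ℕ) : q (i + 1) * (1 + (a (i + 1))⁻¹ * (1 - q i)) = 1 := by
    have hai := ha (i + 1) (Nat.le_add_left 1 i)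
    have hdi := hden i
    rw [hq]
    field_simp
    ring
  exact eq_inv_of_mul_eq_one_left (prod_mul_birthDeathScale hq0 hrec n)

/-- For strictly positive reals `a_1, a_2, …`, with `q_0 = 0` and
`q_i = a_i / (1 + a_i - q_{i-1})`, one has
`∏_{i=1}^n q_i = (∑_{r=0}^n ∏_{j=1}^r a_j⁻¹)⁻¹` for every `n ≥ 0`. -/
theorem birth_death_hitting_product (a q : ℕ → ℝ)
    (ha : ∀ i, 1 ≤ i → 0 < a i)
    (hq0 : q 0 = 0)
    (hq : ∀ i : ℕ, q (i + 1) = a (i + 1) / (1 + a (i + 1) - q i)) :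
    ∀ n : ℕ,
      ∏ i ∈ Finset.Icc 1 n, q i =
        (∑ r ∈ Finset.range (n + 1), ∏ j ∈ Finset.Icc 1 r, (a j)⁻¹)⁻¹ := by
  exact birth_death_hitting_product_general a q (fun i hi => (ha i hi).ne') hq0 hq
    fun i => (birthDeath_denominator_pos ha (hq0 ▸ one_pos) hq i).ne'
end

section
/- Let a_1, a_2, … be real numbers with a_i ≥ 1 for every i, and define q_0 := 0 and q_i := a_i / (1 + a_i − q_{i−1}) for i ≥ 1. Then for every n ≥ 0, Π_{i=1}^{n} q_i ≥ 1/(n+1). -/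
/-!
Each step of the recursion turns `1 - q i` into `(1 - q i) / (1 + a (i + 1) - q i)`, so the ratio of
`1 - q n` to `q 1 ⋯ q n` is multiplied by `1 / a (n + 1)`. The reciprocals of the products
`q 1 ⋯ q n` therefore have explicit increments, and summing them gives the gambler's ruin formula
`1 / (q 1 ⋯ q n) = 1 + (1 - q 0) * ∑ k ∈ Icc 1 n, 1 / (a 1 ⋯ a k)`.
When every product `a 1 ⋯ a k` is at least `1` and `0 ≤ q 0 ≤ 1`, each of the `n` terms contributes
at most `1`.
-/

open Finset

/-- The recursion for the probabilities `q i` that a birth–death chain with odds `a i` of moving up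
from `i - 1` reaches `i` before `-1`, starting from `i - 1`. The values `a 0` and `q 0` are left
free; the chain itself has `q 0 = 0`. -/
def IsBirthDeathRecursion {K : Type*} [Field K] (a q : ℕ → K) : Prop :=
  ∀ i, q (i + 1) = a (i + 1) / (1 + a (i + 1) - q i)

theorem prod_Icc_one_ne_zero {M₀ : Type*} [CommMonoidWithZero M₀] [Nontrivial M₀]
    [NoZeroDivisors M₀] {f : ℕ → M₀} (hf : ∀ i, f (i + 1) ≠ 0) (n : ℕ) :
    ∏ i ∈ Icc 1 n, f i ≠ 0 :=
  prod_ne_zero_iff.2 fun i hi ↦ Nat.sub_add_cancel (mem_Icc.1 hi).1 ▸ hf (i - 1)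

namespace IsBirthDeathRecursion

section Field

variable {K : Type*} [Field K] {a q : ℕ → K}

theorem one_sub_mul_prod_eq (hq : IsBirthDeathRecursion a q)
    (hd : ∀ i, 1 + a (i + 1) - q i ≠ 0) (n : ℕ) :
    (1 - q n) * ∏ i ∈ Icc 1 n, a i = (1 - q 0) * ∏ i ∈ Icc 1 n, q i := by
  induction n with
  | zero => simp
  | succ n ih =>
    have one_sub_succ_mul : (1 - q (n + 1)) * a (n + 1) = (1 - q n) * q (n + 1) := by
      rw [hq n]
      field_simp [hd n]
      ring
    rw [prod_Icc_succ_top (by lia), prod_Icc_succ_top (by lia)]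
    linear_combination (∏ i ∈ Icc 1 n, a i) * one_sub_succ_mul + q (n + 1) * ih

theorem inv_prod_eq_one_add_sum (hq : IsBirthDeathRecursion a q)
    (hd : ∀ i, 1 + a (i + 1) - q i ≠ 0) (ha : ∀ i, a (i + 1) ≠ 0) (n : ℕ) :
    (∏ i ∈ Icc 1 n, q i)⁻¹ = 1 + (1 - q 0) * ∑ k ∈ Icc 1 n, (∏ i ∈ Icc 1 k, a i)⁻¹ := by
  have q_succ_ne_zero (i : ℕ) : q (i + 1) ≠ 0 := hq i ▸ div_ne_zero (ha i) (hd i)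
  have prod_q_ne_zero := prod_Icc_one_ne_zero q_succ_ne_zero
  have one_sub_mul_inv (m : ℕ) :
      (1 - q m) * (∏ i ∈ Icc 1 m, q i)⁻¹ = (1 - q 0) * (∏ i ∈ Icc 1 m, a i)⁻¹ := by
    rw [← div_eq_mul_inv, ← div_eq_mul_inv,
      div_eq_div_iff (prod_q_ne_zero m) (prod_Icc_one_ne_zero ha m)]
    exact hq.one_sub_mul_prod_eq hd m
  induction n with
  | zero => simp
  | succ n ih =>
    calc (∏ i ∈ Icc 1 (n + 1), q i)⁻¹
      _ = (∏ i ∈ Icc 1 n, q i)⁻¹ + (1 - q (n + 1)) * (∏ i ∈ Icc 1 (n + 1), q i)⁻¹ := by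
        rw [prod_Icc_succ_top (by lia)]
        field_simp [prod_q_ne_zero n, q_succ_ne_zero n]
        ring
      _ = 1 + (1 - q 0) * ∑ k ∈ Icc 1 (n + 1), (∏ i ∈ Icc 1 k, a i)⁻¹ := by
        rw [ih, one_sub_mul_inv, sum_Icc_succ_top (by lia)]
        ring

end Field

theorem le_one {K : Type*} [Field K] [LinearOrder K] [IsStrictOrderedRing K] {a q : ℕ → K}
    (hq : IsBirthDeathRecursion a q) (ha : ∀ i, 0 < a (i + 1)) (hq0 : q 0 ≤ 1) (n : ℕ) :
    q n ≤ 1 := by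
  induction n with
  | zero => exact hq0
  | succ n ih =>
    rw [hq n, div_le_one (by linarith [ha n])]
    linarith

end IsBirthDeathRecursion

theorem birth_death_product_lower_bound_general {K : Type*} [Field K] [LinearOrder K]
    [IsStrictOrderedRing K] {a q : ℕ → K} (hq : IsBirthDeathRecursion a q)
    (ha : ∀ k, 1 ≤ ∏ i ∈ Icc 1 k, a i) (hq0_nonneg : 0 ≤ q 0) (hq0_le : q 0 ≤ 1) (n : ℕ) :
    1 / (n + 1 : K) ≤ ∏ i ∈ Icc 1 n, q i := by
  have prod_a_pos (k : ℕ) : 0 < ∏ i ∈ Icc 1 k, a i := zero_lt_one.trans_le (ha k)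
  have a_pos (i : ℕ) : 0 < a (i + 1) := by
    rw [← mul_pos_iff_of_pos_left (prod_a_pos i), ← prod_Icc_succ_top (by lia)]
    exact prod_a_pos (i + 1)
  have one_add_sub_ne_zero (i : ℕ) : 1 + a (i + 1) - q i ≠ 0 := by
    linarith [a_pos i, hq.le_one a_pos hq0_le i]
  have inv_prod_eq := hq.inv_prod_eq_one_add_sum one_add_sub_ne_zero (fun i ↦ (a_pos i).ne') n
  set S := ∑ k ∈ Icc 1 n, (∏ i ∈ Icc 1 k, a i)⁻¹
  have S_nonneg : 0 ≤ S := sum_nonneg fun k _ ↦ (inv_pos.2 (prod_a_pos k)).le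
  have S_le : S ≤ n := by
    simpa using sum_le_card_nsmul (Icc 1 n) _ 1 fun k _ ↦ inv_le_one_of_one_le₀ (ha k)
  have denom_pos : 0 < 1 + (1 - q 0) * S := by
    linarith [mul_nonneg (sub_nonneg.2 hq0_le) S_nonneg]
  have denom_le : 1 + (1 - q 0) * S ≤ n + 1 := by linarith [mul_nonneg hq0_nonneg S_nonneg]
  calc 1 / (n + 1 : K)
    _ ≤ 1 / (1 + (1 - q 0) * S) := one_div_le_one_div_of_le denom_pos denom_le
    _ = ∏ i ∈ Icc 1 n, q i := by rw [← inv_prod_eq, one_div, inv_inv]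

/-- If `a_i ≥ 1` for every `i`, `q_0 = 0` and `q_i = a_i / (1 + a_i - q_{i-1})`,
then `∏_{i=1}^n q_i ≥ 1/(n+1)` for every `n ≥ 0`. -/
theorem birth_death_product_lower_bound (a q : ℕ → ℝ)
    (ha : ∀ i, 1 ≤ i → 1 ≤ a i)
    (hq0 : q 0 = 0)
    (hq : ∀ i : ℕ, q (i + 1) = a (i + 1) / (1 + a (i + 1) - q i)) :
    ∀ n : ℕ, 1 / (n + 1 : ℝ) ≤ ∏ i ∈ Finset.Icc 1 n, q i := by
  have one_le_prod_a (k : ℕ) : 1 ≤ ∏ i ∈ Icc 1 k, a i :=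
    Finset.one_le_prod fun i hi ↦ ha i (mem_Icc.1 hi).1
  exact birth_death_product_lower_bound_general hq one_le_prod_a hq0.ge (hq0.trans_le zero_le_one)
end
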